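/- arXiv:cs/9907001 — 2 statements merged into one kernel-verified Lean document; each statement's English description precedes it below -/
import Mathlib

section
/- A spanning tree T of a connected weighted graph G is the unique minimum spanning tree if and only if for every swap (e,f) — i.e., every pair with e an edge of T, f an edge of G not in T, and e lying on the cycle induced in T by f — the weight of f is strictly greater than the weight of e. -/
open SimpleGraph

/-- `T` is a spanning tree of `G`: a subgraph of `G` (on the same vertex set)
that is connected and acyclic. -/
def IsSpanningTree {V : Type*} (G T : SimpleGraph V) : Prop :=
  T ≤ G ∧ T.IsTree

open scoped Classical in
/-- Total weight of (the edges of) a graph. -/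
noncomputable def treeWeight {V : Type*} [Fintype V] (T : SimpleGraph V)
    (w : Sym2 V → ℝ) : ℝ :=
  ∑ e ∈ T.edgeFinset, w e

/-- `(e, f)` is a swap for the spanning tree `T` of `G`:
`e ∈ T`, `f ∈ G \ T`, and `(T ∪ {f}) \ {e}` is again a spanning tree of `G`. -/
def IsSwap {V : Type*} (G T : SimpleGraph V) (e f : Sym2 V) : Prop :=
  e ∈ T.edgeSet ∧ f ∈ G.edgeSet ∧ f ∉ T.edgeSet ∧
    IsSpanningTree G (SimpleGraph.fromEdgeSet ((insert f T.edgeSet) \ {e}))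

/-- Exchange: `T - e + f`. -/
def exch {V : Type*} (T : SimpleGraph V) (e f : Sym2 V) : SimpleGraph V :=
  SimpleGraph.fromEdgeSet ((insert f T.edgeSet) \ {e})

lemma exch_edgeSet {V : Type*} (T : SimpleGraph V) (e f : Sym2 V) (hf : ¬ f.IsDiag) :
    (exch T e f).edgeSet = (insert f T.edgeSet) \ {e} := by
  unfold exch
  rw [edgeSet_fromEdgeSet]
  ext z
  simp only [Set.mem_sdiff, Set.mem_insert_iff, Set.mem_singleton_iff]
  constructor
  · exact fun h => h.1
  · intro h
    refine ⟨h, ?_⟩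
    rcases h.1 with rfl | h1
    · exact hf
    · exact T.not_isDiag_of_mem_edgeSet h1

lemma exch_weight {V : Type*} [Fintype V] (T : SimpleGraph V) (w : Sym2 V → ℝ) (e f : Sym2 V)
    (hf : ¬ f.IsDiag) (he : e ∈ T.edgeSet) (hfT : f ∉ T.edgeSet) :
    treeWeight (exch T e f) w = treeWeight T w - w e + w f := by
  classical
  have key : ∀ (i : Fintype (exch T e f).edgeSet) (j : Fintype T.edgeSet),
      (@edgeFinset _ (exch T e f) i) = insert f ((@edgeFinset _ T j).erase e) := by
    intro i j
    ext z
    rw [mem_edgeFinset, exch_edgeSet T e f hf]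
    have hne : f ≠ e := by rintro rfl; exact hfT he
    simp only [Set.mem_sdiff, Set.mem_insert_iff, Set.mem_singleton_iff, Finset.mem_insert,
      Finset.mem_erase, mem_edgeFinset]
    constructor
    · rintro ⟨h | h, h2⟩
      · exact Or.inl h
      · exact Or.inr ⟨h2, h⟩
    · rintro (h | h)
      · exact ⟨Or.inl h, h ▸ hne⟩
      · exact ⟨Or.inr h.2, h.1⟩
  unfold treeWeight
  rw [key _ inferInstance, Finset.sum_insert, Finset.sum_erase_eq_sub]
  · have : ∀ (i j : Fintype T.edgeSet), ∑ e ∈ @edgeFinset _ T i, w e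
        = ∑ e ∈ @edgeFinset _ T j, w e := by
      intro i j; congr!
    rw [this _ inferInstance]
    ring
  · simpa using he
  · simp [hfT]

lemma exch_isTree {V : Type*} [Fintype V] (T : SimpleGraph V) (hT : T.IsTree) (a b : V)
    (f : Sym2 V) (hf : ¬ f.IsDiag) (he : s(a, b) ∈ T.edgeSet) (hfT : f ∉ T.edgeSet)
    (hr : (exch T s(a, b) f).Reachable a b) : (exch T s(a, b) f).IsTree := by
  classical
  have hadj : ∀ u v, T.Adj u v → (exch T s(a, b) f).Reachable u v := by
    intro u v h
    by_cases h' : s(u, v) = s(a, b)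
    · rcases Sym2.eq_iff.1 h' with ⟨rfl, rfl⟩ | ⟨rfl, rfl⟩
      · exact hr
      · exact hr.symm
    · apply Adj.reachable
      rw [← mem_edgeSet, exch_edgeSet T _ f hf]
      exact ⟨Or.inr h, h'⟩
  have hw : ∀ u v, T.Walk u v → (exch T s(a, b) f).Reachable u v := by
    intro u v p
    induction p with
    | nil => exact Reachable.refl _
    | cons h _ ih => exact (hadj _ _ h).trans ih
  rw [isTree_iff_connected_and_card]
  have := hT.connected.nonempty
  refine ⟨⟨fun u v => ?_⟩, ?_⟩
  · obtain ⟨p⟩ := hT.connected u v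
    exact hw u v p
  · have h2 := (isTree_iff_connected_and_card.1 hT).2
    rw [← h2]
    congr 1
    rw [exch_edgeSet T _ f hf]
    change Set.ncard _ = Set.ncard _
    have hne : f ≠ s(a, b) := by rintro rfl; exact hfT he
    rw [Set.ncard_sdiff_singleton_of_mem (Set.mem_insert_of_mem _ he), Set.ncard_insert_of_notMem hfT]
    simp

lemma reach_split {V : Type*} (T : SimpleGraph V) (hT : T.Connected) (x y v : V) :
    (T.deleteEdges {s(x, y)}).Reachable x v ∨ (T.deleteEdges {s(x, y)}).Reachable y v := by
  have : ∀ u v, T.Walk u v →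
      ((T.deleteEdges {s(x, y)}).Reachable x u ∨ (T.deleteEdges {s(x, y)}).Reachable y u) →
      ((T.deleteEdges {s(x, y)}).Reachable x v ∨ (T.deleteEdges {s(x, y)}).Reachable y v) := by
    intro u v p
    induction p with
    | nil => exact id
    | @cons u z _ h _ ih =>
      intro hu
      apply ih
      by_cases h' : s(u, z) = s(x, y)
      · rcases Sym2.eq_iff.1 h' with ⟨rfl, rfl⟩ | ⟨rfl, rfl⟩
        · exact Or.inr (Reachable.refl _)
        · exact Or.inl (Reachable.refl _)
      · have : (T.deleteEdges {s(x, y)}).Adj u z := by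
          rw [deleteEdges_adj]; exact ⟨h, h'⟩
        exact hu.imp (fun k => k.trans this.reachable) (fun k => k.trans this.reachable)
  obtain ⟨p⟩ := hT x v
  exact this _ _ p (Or.inl (Reachable.refl _))

lemma del_le_exch {V : Type*} (T : SimpleGraph V) (e f : Sym2 V) (hf : ¬ f.IsDiag) :
    T.deleteEdges {e} ≤ exch T e f := by
  rw [← edgeSet_subset_edgeSet, exch_edgeSet T e f hf, edgeSet_deleteEdges]
  exact fun z hz => ⟨Or.inr hz.1, hz.2⟩

lemma symm_exch {V : Type*} [Fintype V] (T T' : SimpleGraph V) (hT : T.IsTree) (hT' : T'.IsTree)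
    (f : Sym2 V) (hf' : f ∈ T'.edgeSet) (hfT : f ∉ T.edgeSet) :
    ∃ e, e ∈ T.edgeSet ∧ e ∉ T'.edgeSet ∧ (exch T e f).IsTree ∧ (exch T' f e).IsTree := by
  classical
  induction f using Sym2.ind with
  | _ x y =>
  have hfd := T'.not_isDiag_of_mem_edgeSet hf'
  obtain ⟨p, hp⟩ := hT.connected.exists_isPath x y
  have hbr : ¬ (T'.deleteEdges {s(x, y)}).Reachable x y :=
    isBridge_iff.1 (isAcyclic_iff_forall_isBridge.1 hT'.isAcyclic hf')
  obtain ⟨d, hd, ha, hb⟩ := p.exists_boundary_dart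
    {v | (T'.deleteEdges {s(x, y)}).Reachable x v} (Reachable.refl _) hbr
  obtain ⟨⟨a, b⟩, hab⟩ := d
  simp only [Set.mem_ofPred_eq] at ha hb hab
  have hmem : s(a, b) ∈ p.edges := List.mem_map.2 ⟨_, hd, rfl⟩
  have hed : ¬ (s(a, b)).IsDiag := T.not_isDiag_of_mem_edgeSet hab
  have hne : s(a, b) ≠ s(x, y) := by
    intro h; rw [← h] at hfT; exact hfT hab
  have heT' : s(a, b) ∉ T'.edgeSet := by
    intro h
    apply hb
    refine ha.trans (Adj.reachable ?_)
    rw [deleteEdges_adj]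
    exact ⟨h, hne⟩
  refine ⟨s(a, b), hab, heT', ?_, ?_⟩
  · apply exch_isTree T hT a b _ hfd hab hfT
    have hle := del_le_exch T s(a, b) s(x, y) hfd
    have hxy : (exch T s(a, b) s(x, y)).Reachable x y := by
      apply Adj.reachable
      rw [← mem_edgeSet, exch_edgeSet T _ _ hfd]
      exact ⟨Or.inl rfl, fun h => hne h.symm⟩
    have hno : ¬ (T.deleteEdges {s(a, b)}).Reachable x y := by
      intro h
      obtain ⟨q, hq⟩ := h.exists_isPath
      have hq2 : (q.mapLe (deleteEdges_le {s(a, b)})).IsPath := hq.mapLe _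
      have := congrArg Subtype.val (hT.isAcyclic.path_unique ⟨p, hp⟩ ⟨_, hq2⟩)
      simp only at this
      rw [this, Walk.edges_mapLe_eq_edges] at hmem
      have := q.edges_subset_edgeSet hmem
      rw [edgeSet_deleteEdges] at this
      exact this.2 rfl
    rcases reach_split T hT.connected a b x with h1 | h1 <;>
      rcases reach_split T hT.connected a b y with h2 | h2
    · exact absurd (h1.symm.trans h2) hno
    · exact (h1.mono hle).trans (hxy.trans (h2.mono hle).symm)
    · exact (h2.mono hle).trans (hxy.symm.trans (h1.mono hle).symm)
    · exact absurd (h1.symm.trans h2) hno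
  · apply exch_isTree T' hT' x y _ hed hf' heT'
    have hle := del_le_exch T' s(x, y) s(a, b) hed
    have hab' : (exch T' s(x, y) s(a, b)).Reachable a b := by
      apply Adj.reachable
      rw [← mem_edgeSet, exch_edgeSet T' _ _ hed]
      exact ⟨Or.inl rfl, hne⟩
    have hyb := (reach_split T' hT'.connected x y b).resolve_left hb
    exact (ha.mono hle).trans (hab'.trans (hyb.mono hle).symm)

lemma exch_le {V : Type*} (G T : SimpleGraph V) (h : T ≤ G) (e f : Sym2 V) (hf : f ∈ G.edgeSet) :
    exch T e f ≤ G := by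
  rw [← edgeSet_subset_edgeSet, exch_edgeSet T e f (G.not_isDiag_of_mem_edgeSet hf)]
  rintro z ⟨rfl | hz, -⟩
  · exact hf
  · exact edgeSet_subset_edgeSet.2 h hz

/-- A spanning tree `T` of a connected weighted graph `G` is the unique minimum
spanning tree iff for every swap `(e,f)`, the weight of `f` is strictly greater
than the weight of `e`. -/
theorem unique_mst_iff_swaps {V : Type*} [Fintype V] [DecidableEq V]
    (G T : SimpleGraph V) (w : Sym2 V → ℝ)
    (hG : G.Connected) (hT : IsSpanningTree G T) :
    (∀ T' : SimpleGraph V, IsSpanningTree G T' → T' ≠ T →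
        treeWeight T w < treeWeight T' w) ↔
      (∀ e f : Sym2 V, IsSwap G T e f → w e < w f) := by
  constructor
  · rintro h e f ⟨he, hfG, hfT, hs⟩
    have hfd := G.not_isDiag_of_mem_edgeSet hfG
    change IsSpanningTree G (exch T e f) at hs
    have h1 := h _ hs (by
      intro heq
      have : e ∈ (exch T e f).edgeSet := by rw [heq]; exact he
      rw [exch_edgeSet T e f hfd] at this
      exact this.2 rfl)
    rw [exch_weight T w e f hfd he hfT] at h1
    linarith
  · intro h
    have main : ∀ n : ℕ, ∀ T' : SimpleGraph V, (T'.edgeSet \ T.edgeSet).ncard = n →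
        IsSpanningTree G T' → T' ≠ T → treeWeight T w < treeWeight T' w := by
      intro n
      induction n using Nat.strong_induction_on with
      | _ n ih =>
      intro T' hn hT' hne
      have hex : ∃ f, f ∈ T'.edgeSet ∧ f ∉ T.edgeSet := by
        by_contra hcon
        push Not at hcon
        have hle : T' ≤ T := edgeSet_subset_edgeSet.1 hcon
        exact hne (le_antisymm hle
          ((isTree_iff_minimal_connected.1 hT.2).2 hT'.2.connected hle))
      obtain ⟨f, hf', hfT⟩ := hex
      obtain ⟨e, he, he', ht1, ht2⟩ := symm_exch T T' hT.2 hT'.2 f hf' hfT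
      have hfG : f ∈ G.edgeSet := edgeSet_subset_edgeSet.2 hT'.1 hf'
      have heG : e ∈ G.edgeSet := edgeSet_subset_edgeSet.2 hT.1 he
      have hlt := h e f ⟨he, hfG, hfT, exch_le G T hT.1 e f hfG, ht1⟩
      have hed := G.not_isDiag_of_mem_edgeSet heG
      have hw := exch_weight T' w f e hed hf' he'
      by_cases heq : exch T' f e = T
      · rw [heq] at hw; linarith
      · have := ih _ (by
          rw [← hn]
          apply Set.ncard_lt_ncard _ (Set.toFinite _)
          rw [exch_edgeSet T' f e hed]
          refine ⟨?_, fun hsub => (hsub ⟨hf', hfT⟩).1.2 rfl⟩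
          rintro z ⟨⟨rfl | hz, -⟩, hz2⟩
          · exact absurd he hz2
          · exact ⟨hz, hz2⟩) (exch T' f e) rfl ⟨exch_le G T' hT'.1 f e heG, ht2⟩ heq
        linarith
    exact fun T' => main _ T' rfl
end

section
/- In the auxiliary tree built recursively on a weighted tree T — whose root is the maximum-weight edge e of T, with the two children being auxiliary trees of the two components of T \ {e}, and whose leaves are the vertices of T — the least common ancestor of two leaves u and v is exactly the maximum-weight edge on the path between u and v in T. -/
open SimpleGraph

/-- A binary auxiliary tree whose leaves are labelled by vertices and whose
internal nodes are labelled by edges. -/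
inductive AuxTree (V : Type*) where
  | leaf : V → AuxTree V
  | node : Sym2 V → AuxTree V → AuxTree V → AuxTree V

/-- The leaf `v` occurs in the auxiliary tree. -/
def AuxTree.memLeaf {V : Type*} [DecidableEq V] : AuxTree V → V → Bool
  | .leaf x, v => decide (x = v)
  | .node _ l r, v => l.memLeaf v || r.memLeaf v

/-- The least common ancestor (an internal node, i.e. an edge) of two leaves of
the auxiliary tree. -/
def AuxTree.lca {V : Type*} [DecidableEq V] : AuxTree V → V → V → Option (Sym2 V)
  | .leaf _, _, _ => none
  | .node e l r, u, v =>
      if l.memLeaf u && l.memLeaf v then l.lca u v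
      else if r.memLeaf u && r.memLeaf v then r.lca u v
      else some e

/-- `a` is the auxiliary tree of the weighted tree `T` restricted to the vertex
set `s`: for a single vertex it is a leaf; otherwise its root is the
maximum-weight edge `e` of `T` within `s`, and its two subtrees are the auxiliary
trees of the two components of `T` restricted to `s` with `e` removed. -/
def IsAuxTree {V : Type*} (T : SimpleGraph V) (w : Sym2 V → ℝ) :
    Set V → AuxTree V → Prop
  | s, .leaf v => s = {v}
  | s, .node e l r => ∃ s₁ s₂ : Set V,
      s₁ ∪ s₂ = s ∧ Disjoint s₁ s₂ ∧
      IsAuxTree T w s₁ l ∧ IsAuxTree T w s₂ r ∧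
      (T.induce s₁).Connected ∧ (T.induce s₂).Connected ∧
      e ∈ T.edgeSet ∧ (∃ x ∈ s₁, ∃ y ∈ s₂, e = s(x, y)) ∧
      (∀ e' ∈ T.edgeSet, (∀ v ∈ e', v ∈ s) → w e' ≤ w e)

theorem auxtree_memLeaf_iff {V : Type*} [DecidableEq V] (T : SimpleGraph V) (w : Sym2 V → ℝ)
    (a : AuxTree V) : ∀ (s : Set V), IsAuxTree T w s a → ∀ v, a.memLeaf v = true ↔ v ∈ s := by
  induction a with
  | leaf x =>
    intro s hs v
    simp only [IsAuxTree] at hs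
    subst hs
    simp [AuxTree.memLeaf, eq_comm]
  | node e l r ihl ihr =>
    intro s hs v
    simp only [IsAuxTree] at hs
    obtain ⟨s₁, s₂, rfl, -, hl, hr, -⟩ := hs
    simp [AuxTree.memLeaf, ihl s₁ hl, ihr s₂ hr]

theorem auxtree_exists_path {V : Type*} (T : SimpleGraph V) (s : Set V)
    (hs : (T.induce s).Connected) (u v : V) (hu : u ∈ s) (hv : v ∈ s) :
    ∃ q : T.Walk u v, q.IsPath ∧ ∀ x ∈ q.support, x ∈ s := by
  classical
  obtain ⟨q, hq⟩ := (hs.preconnected ⟨u, hu⟩ ⟨v, hv⟩).exists_isPath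
  refine ⟨q.map (Embedding.induce (G := T) s).toHom,
    hq.map (Embedding.induce (G := T) s).injective, ?_⟩
  intro x hx
  have hx' := (Walk.support_map (Embedding.induce (G := T) s).toHom q) ▸ hx
  rw [List.mem_map] at hx'
  obtain ⟨y, -, rfl⟩ := hx'
  exact y.2

theorem auxtree_cross {V : Type*} (T : SimpleGraph V) (hT : T.IsTree)
    (s₁ s₂ : Set V) (hd : Disjoint s₁ s₂)
    (h₁ : (T.induce s₁).Connected) (h₂ : (T.induce s₂).Connected)
    (x y : V) (hx : x ∈ s₁) (hy : y ∈ s₂) (hxy : T.Adj x y)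
    (u v : V) (hu : u ∈ s₁) (hv : v ∈ s₂) (p : T.Walk u v) (hp : p.IsPath) :
    s(x, y) ∈ p.edges ∧ ∀ z ∈ p.support, z ∈ s₁ ∪ s₂ := by
  obtain ⟨q₁, hq₁, hs₁⟩ := auxtree_exists_path T s₁ h₁ u x hu hx
  obtain ⟨q₂, hq₂, hs₂⟩ := auxtree_exists_path T s₂ h₂ y v hy hv
  have hq : (q₁.append (Walk.cons hxy q₂)).IsPath := by
    rw [Walk.isPath_def, Walk.support_append, Walk.support_cons, List.tail_cons,
      List.nodup_append]
    refine ⟨hq₁.support_nodup, hq₂.support_nodup, ?_⟩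
    rintro a ha b hb rfl
    exact Set.disjoint_left.1 hd (hs₁ a ha) (hs₂ a hb)
  have : p = q₁.append (Walk.cons hxy q₂) :=
    congrArg Subtype.val ((hT.isAcyclic.subsingleton_path u v).elim ⟨p, hp⟩ ⟨_, hq⟩)
  subst this
  refine ⟨by simp, ?_⟩
  intro z hz
  rw [Walk.support_append, Walk.support_cons, List.tail_cons, List.mem_append] at hz
  exact hz.imp (hs₁ z) (hs₂ z)

theorem auxtree_general {V : Type*} [DecidableEq V]
    (T : SimpleGraph V) (hT : T.IsTree) (w : Sym2 V → ℝ) (a : AuxTree V) :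
    ∀ s : Set V, IsAuxTree T w s a → ∀ u v : V, u ∈ s → v ∈ s → u ≠ v →
    ∀ p : T.Walk u v, p.IsPath →
    ∃ e ∈ p.edges, a.lca u v = some e ∧ ∀ e' ∈ p.edges, w e' ≤ w e := by
  induction a with
  | leaf x =>
    intro s hs u v hu hv huv
    simp only [IsAuxTree] at hs
    subst hs
    exact absurd (hu.trans hv.symm) huv
  | node e l r ihl ihr =>
    intro s hs u v hu hv huv p hp
    simp only [IsAuxTree] at hs
    obtain ⟨s₁, s₂, rfl, hd, hl, hr, h₁, h₂, he, ⟨x, hx, y, hy, rfl⟩, hmax⟩ := hs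
    have ml := auxtree_memLeaf_iff T w l s₁ hl
    have mr := auxtree_memLeaf_iff T w r s₂ hr
    have hdl : ∀ z, z ∈ s₁ → z ∉ s₂ := fun z hz => Set.disjoint_left.1 hd hz
    have key : (s(x, y) ∈ p.edges ∧ ∀ z ∈ p.support, z ∈ s₁ ∪ s₂) →
        s(x, y) ∈ p.edges ∧ ∀ e' ∈ p.edges, w e' ≤ w s(x, y) := by
      rintro ⟨h, h'⟩
      refine ⟨h, fun e' he' => hmax e' (p.edges_subset_edgeSet he') fun z hz => h' z ?_⟩
      exact p.mem_support_of_mem_edges he' hz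
    have cl : (l.memLeaf u && l.memLeaf v) = true ↔ u ∈ s₁ ∧ v ∈ s₁ := by
      rw [Bool.and_eq_true, ml, ml]
    have cr : (r.memLeaf u && r.memLeaf v) = true ↔ u ∈ s₂ ∧ v ∈ s₂ := by
      rw [Bool.and_eq_true, mr, mr]
    simp only [AuxTree.lca]
    rcases hu with hu | hu <;> rcases hv with hv | hv
    · rw [if_pos (cl.2 ⟨hu, hv⟩)]
      exact ihl s₁ hl u v hu hv huv p hp
    · rw [if_neg fun h => hdl v (cl.1 h).2 hv, if_neg fun h => hdl u hu (cr.1 h).1]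
      obtain ⟨k₁, k₂⟩ := key (auxtree_cross T hT s₁ s₂ hd h₁ h₂ x y hx hy he u v hu hv p hp)
      exact ⟨_, k₁, rfl, k₂⟩
    · rw [if_neg fun h => hdl u (cl.1 h).1 hu, if_neg fun h => hdl v hv (cr.1 h).2]
      have := auxtree_cross T hT s₁ s₂ hd h₁ h₂ x y hx hy he v u hv hu p.reverse hp.reverse
      obtain ⟨k₁, k₂⟩ := key (by simpa using this)
      exact ⟨_, k₁, rfl, k₂⟩
    · rw [if_neg fun h => hdl u (cl.1 h).1 hu, if_pos (cr.2 ⟨hu, hv⟩)]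
      exact ihr s₂ hr u v hu hv huv p hp

/-- In the auxiliary tree built recursively on a weighted tree `T`, the least
common ancestor of two leaves `u` and `v` is exactly the maximum-weight edge on
the path between `u` and `v` in `T`. -/
theorem auxtree_lca_is_heaviest_edge {V : Type*} [Fintype V] [DecidableEq V]
    (T : SimpleGraph V) (hT : T.IsTree) (w : Sym2 V → ℝ)
    (hw : Function.Injective fun e : T.edgeSet => w e)
    (a : AuxTree V) (ha : IsAuxTree T w Set.univ a)
    (u v : V) (huv : u ≠ v) (p : T.Walk u v) (hp : p.IsPath) :
    ∃ e ∈ p.edges, a.lca u v = some e ∧ ∀ e' ∈ p.edges, w e' ≤ w e := by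
  exact auxtree_general T hT w a Set.univ ha u v trivial trivial huv p hp
end
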